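/- Let $k$ be a field, $n \ge 1$, $1 \le i \le n$, $\ell \in \{0,1\}$, and let $c = (c_1,\dots,c_n) \in k^n$ with $c_i \neq 0$ and $c_i \neq 1$. The $k$-algebra homomorphism from the polynomial ring $k[T_1,\dots,T_n]$ to the polynomial ring $k[Y_1,\dots,Y_{n+1}]$ sending $T_j \mapsto Y_j$ for $j \neq i$ and $T_i \mapsto (1-(1-c_i)(1-Y_{n+1}))\,Y_i$ if $\ell = 0$, respectively $T_i \mapsto 1-(1-c_i)\,Y_i\,(1-Y_{n+1})$ if $\ell = 1$, makes $k[Y_1,\dots,Y_{n+1}]$ a flat $k[T_1,\dots,T_n]$-module; equivalently, the morphism $H^{n+1}_{(\ell),c,i} : \mathbb{A}^{n+1}_k \to \mathbb{A}^n_k$ is flat. -/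

import Mathlib

/-!
For `P ∈ R[X][Y]`, the map `R[T] → R[X][Y]`, `T ↦ P`, exhibits `R[X][Y]` as the quotient of the
flat `R[T]`-algebra `R[T][X][Y]` by `P - T`. A quotient `B / s` of a flat `A`-algebra is flat as
soon as `s` remains a nonzerodivisor in `B / I B` for every ideal `I` of `A`. By McCoy's theorem
this holds for `P - T` if, for some `b ≠ 0`, the coefficient of `Y ^ b` in `P`, in which `T` does
not occur, has unit content.

The variables other than `Y_i` and `Y_{n+1}` are carried along unchanged, so they can be absorbed
into `R`. The coefficient of `Y_i` is `c_i + (1 - c_i) Y_{n+1}` for `ℓ = 0`, whose coefficients sum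
to `1`, and `(c_i - 1) + (1 - c_i) Y_{n+1}` for `ℓ = 1`, where `1 - c_i` is a unit.
-/

open scoped Polynomial.Bivariate TensorProduct nonZeroDivisors

section FlatCokernel

variable {A L M N : Type*} [CommRing A]
  [AddCommGroup L] [Module A L] [AddCommGroup M] [Module A M] [AddCommGroup N] [Module A N]

variable (M) in
/-- The multiplication map `I ⊗ M → M`, whose injectivity for all `I` characterises flatness. -/
noncomputable def idealSMul (I : Ideal A) : I ⊗[A] M →ₗ[A] M :=
  TensorProduct.lift ((LinearMap.lsmul A M).comp I.subtype)

lemma idealSMul_lTensor (I : Ideal A) (f : L →ₗ[A] M) (t : I ⊗[A] L) :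
    idealSMul M I (f.lTensor I t) = f (idealSMul L I t) := by
  suffices idealSMul M I ∘ₗ f.lTensor I = f ∘ₗ idealSMul L I from DFunLike.congr_fun this t
  ext a x
  simp [idealSMul]

lemma range_idealSMul (I : Ideal A) : (idealSMul M I).range = I • ⊤ := by
  rw [idealSMul, ← LinearMap.lid_comp_rTensor, LinearMap.range_comp,
    Submodule.map_range_rTensor_subtype_lid]

lemma flat_of_exact_of_mem_smul_top [Module.Flat A M] {f : L →ₗ[A] M} {g : M →ₗ[A] N}
    (hfg : Function.Exact f g) (hg : Function.Surjective g)
    (hf : ∀ (I : Ideal A) (x : L), f x ∈ I • (⊤ : Submodule A M) → x ∈ I • (⊤ : Submodule A L)) :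
    Module.Flat A N := by
  refine Module.Flat.iff_lift_lsmul_comp_subtype_injective.mpr fun I hI ↦
    (injective_iff_map_eq_zero (idealSMul N I)).mpr fun t ht ↦ ?_
  have hM : Function.Injective (idealSMul M I) :=
    Module.Flat.iff_lift_lsmul_comp_subtype_injective.mp ‹_› hI
  obtain ⟨u, rfl⟩ := LinearMap.lTensor_surjective I hg t
  rw [idealSMul_lTensor] at ht
  obtain ⟨x, hx⟩ := (hfg _).mp ht
  obtain ⟨v, rfl⟩ : x ∈ (idealSMul L I).range := by
    rw [range_idealSMul]
    refine hf I x ?_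
    rw [hx, ← range_idealSMul]
    exact LinearMap.mem_range_self _ u
  have hu : f.lTensor I v = u := hM <| by rw [idealSMul_lTensor, hx]
  rw [← hu, ← LinearMap.comp_apply, ← LinearMap.lTensor_comp, hfg.linearMap_comp_eq_zero,
    LinearMap.lTensor_zero, LinearMap.zero_apply]

end FlatCokernel

lemma flat_of_ringEquiv_square {A B D E : Type*} [CommRing A] [CommRing B] [CommRing D]
    [CommRing E] {f : B →+* D} (hf : f.Flat) {g : A →+* E} (e : A ≃+* B) (e' : E ≃+* D)
    (hsquare : ∀ x, e' (g x) = f (e x)) : g.Flat := by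
  obtain rfl : g = (e'.symm.toRingHom.comp f).comp e.toRingHom :=
    RingHom.ext fun x ↦ (e'.eq_symm_apply).mpr (hsquare x)
  exact .comp (.of_bijective e.bijective) (.comp hf (.of_bijective e'.symm.bijective))

section TransversalRegularity

open Polynomial

variable (A : Type*) {B : Type*} [CommRing A] [CommRing B] [Algebra A B]

/-- `s` is transversally regular relative to `A` (EGA IV, 19.2): it is a nonzerodivisor on `B / I B`
for every ideal `I` of `A`. It is phrased through membership in `I B` to avoid the quotients. -/
def IsTransversallyRegular (s : B) : Prop :=
  ∀ (I : Ideal A) (x : B), s * x ∈ I.map (algebraMap A B) → x ∈ I.map (algebraMap A B)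

variable {A}

namespace IsTransversallyRegular

lemma of_forall_coeff {f : B[X]}
    (hf : ∀ (I : Ideal A) (x : B), (∀ m, f.coeff m * x ∈ I.map (algebraMap A B)) →
      x ∈ I.map (algebraMap A B)) : IsTransversallyRegular A f := by
  intro I q hq
  set J : Ideal B := I.map (algebraMap A B) with hJ
  have hmap : I.map (algebraMap A B[X]) = J.map C := by
    rw [hJ, Ideal.map_map]
    rfl
  have hker (p : B[X]) : p ∈ J.map C ↔ p.map (Ideal.Quotient.mk J) = 0 := by
    simp only [Ideal.mem_map_C_iff, Polynomial.ext_iff, coeff_map, coeff_zero,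
      Ideal.Quotient.eq_zero_iff_mem]
  have hreg : f.map (Ideal.Quotient.mk J) ∈ (B ⧸ J)[X]⁰ := by
    refine Polynomial.mem_nonZeroDivisors_iff.mpr fun x hx ↦ ?_
    obtain ⟨x, rfl⟩ := Ideal.Quotient.mk_surjective x
    refine Ideal.Quotient.eq_zero_iff_mem.mpr (hf I x fun m ↦ ?_)
    rw [mul_comm, ← Ideal.Quotient.eq_zero_iff_mem, map_mul, ← coeff_map, ← smul_eq_mul,
      ← coeff_smul, hx, coeff_zero]
  rw [hmap, hker] at hq ⊢
  rw [Polynomial.map_mul] at hq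
  exact (mul_left_mem_nonZeroDivisors_eq_zero_iff hreg).mp hq

lemma of_coeff {f : B[X]} {m : ℕ} (hf : IsTransversallyRegular A (f.coeff m)) :
    IsTransversallyRegular A f :=
  of_forall_coeff fun I x hx ↦ hf I x (hx m)

lemma of_contentIdeal_eq_top {f : B[X]} (hf : f.contentIdeal = ⊤) :
    IsTransversallyRegular A f := by
  refine of_forall_coeff fun I x hx ↦ ?_
  set J : Ideal B := I.map (algebraMap A B)
  have hle : f.contentIdeal ≤ J.colon {x} := by
    rw [contentIdeal_def, Ideal.span_le]
    intro y hy
    obtain ⟨m, -, rfl⟩ := mem_coeffs_iff.mp hy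
    exact Submodule.mem_colon_singleton.mpr (hx m)
  simpa using Submodule.mem_colon_singleton.mp (hle (hf ▸ Submodule.mem_top : (1 : B) ∈ _))

lemma flat_comp_algebraMap {D : Type*} [CommRing D] [Module.Flat A B] {s : B}
    (hs : IsTransversallyRegular A s) (φ : B →+* D) (hφ : Function.Surjective φ)
    (hker : RingHom.ker φ = Ideal.span {s}) : (φ.comp (algebraMap A B)).Flat := by
  let : Algebra A D := (φ.comp (algebraMap A B)).toAlgebra
  let φA : B →ₐ[A] D := { φ with commutes' := fun _ ↦ rfl }
  refine flat_of_exact_of_mem_smul_top (f := LinearMap.mulLeft A s) (g := φA.toLinearMap)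
    (fun x ↦ ?_) hφ fun I x hx ↦ ?_
  · change φ x = 0 ↔ _
    rw [← RingHom.mem_ker, hker, Ideal.mem_span_singleton']
    simp only [Set.mem_range, LinearMap.mulLeft_apply, mul_comm s]
  · rw [Ideal.smul_top_eq_map, Submodule.restrictScalars_mem] at hx ⊢
    exact hs I x hx

end IsTransversallyRegular

end TransversalRegularity

lemma ker_eq_of_quotient_section {B D : Type*} [CommRing B] [CommRing D] {φ : B →+* D}
    {I : Ideal B} (hI : I ≤ RingHom.ker φ) (σ : D →+* B)
    (hσ : ((Ideal.Quotient.mk I).comp σ).comp φ = Ideal.Quotient.mk I) : RingHom.ker φ = I := by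
  refine le_antisymm (fun x hx ↦ ?_) hI
  rw [← Ideal.Quotient.eq_zero_iff_mem, ← hσ, RingHom.comp_apply, RingHom.mem_ker.mp hx, map_zero]

section Bivariate

open Polynomial

-- The ideal and quotient instances on `R[X][X][Y]` are out of reach of the default depth.
set_option maxSynthPendingDepth 3

variable {R : Type*} [CommRing R]

/-- The equation `P(X, Y) - T` of the graph of `P` in `R[T][X][Y]`; the innermost variable of
`R[X][X][Y]` plays the role of `T`. -/
noncomputable def graphEquation (P : R[X][Y]) : R[X][X][Y] :=
  P.map (mapRingHom C) - C (C X)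

lemma isTransversallyRegular_graphEquation {P : R[X][Y]} {b : ℕ} (hb : b ≠ 0)
    (hP : (P.coeff b).contentIdeal = ⊤) : IsTransversallyRegular R[X] (graphEquation P) := by
  have hcoeff : (graphEquation P).coeff b = (P.coeff b).map C := by
    simp [graphEquation, coeff_C, hb]
  refine .of_coeff (m := b) (.of_contentIdeal_eq_top ?_)
  rw [hcoeff, contentIdeal_map_eq_map_contentIdeal, hP, Ideal.map_top]

/-- Evaluation of `R[T][X][Y]` on the graph of `P`, that is, at `T = P(X, Y)`. -/
noncomputable def graphEval (P : R[X][Y]) : R[X][X][Y] →+* R[X][Y] :=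
  eval₂RingHom (eval₂RingHom (aeval P : R[X] →ₐ[R] R[X][Y]).toRingHom (C X)) Y

lemma graphEval_comp_algebraMap (P : R[X][Y]) :
    (graphEval P).comp (algebraMap R[X] R[X][X][Y]) = (aeval P : R[X] →ₐ[R] R[X][Y]).toRingHom := by
  refine RingHom.ext fun x ↦ ?_
  change graphEval P (C (C x)) = _
  simp [graphEval]

lemma graphEval_map_C (P Q : R[X][Y]) : graphEval P (Q.map (mapRingHom C)) = Q := by
  suffices (graphEval P).comp (mapRingHom (mapRingHom C)) = RingHom.id _ from
    DFunLike.congr_fun this Q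
  refine ringHom_ext' (ringHom_ext' ?_ ?_) ?_
  · ext x
    simp [graphEval]
  · simp [graphEval]
  · simp [graphEval]

lemma ker_graphEval (P : R[X][Y]) :
    RingHom.ker (graphEval P) = Ideal.span {graphEquation P} := by
  have hmem : graphEquation P ∈ RingHom.ker (graphEval P) := by
    rw [RingHom.mem_ker, graphEquation, map_sub, graphEval_map_C]
    simp [graphEval]
  refine ker_eq_of_quotient_section ((Ideal.span_singleton_le_iff_mem _).mpr hmem)
    (mapRingHom (mapRingHom C)) ?_
  refine ringHom_ext' (ringHom_ext' (ringHom_ext' ?_ ?_) ?_) ?_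
  · ext x
    simp [graphEval]
  · have hgraph := Ideal.Quotient.mk_eq_mk_iff_sub_mem _ _ |>.mpr <|
      Ideal.mem_span_singleton_self (graphEquation P)
    simpa [graphEval] using hgraph
  · simp [graphEval]
  · simp [graphEval]

lemma flat_aeval_of_contentIdeal_coeff_eq_top {P : R[X][Y]} {b : ℕ} (hb : b ≠ 0)
    (hP : (P.coeff b).contentIdeal = ⊤) :
    (aeval P : R[X] →ₐ[R] R[X][Y]).toRingHom.Flat := by
  rw [← graphEval_comp_algebraMap]
  have : Module.Flat R[X] R[X][X][Y] := .trans R[X] R[X][X] R[X][X][Y]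
  exact (isTransversallyRegular_graphEquation hb hP).flat_comp_algebraMap (graphEval P)
    (fun Q ↦ ⟨Q.map (mapRingHom C), graphEval_map_C P Q⟩) (ker_graphEval P)

end Bivariate

section IsolateVariable

open Polynomial

variable {R : Type*} [CommRing R] {m : ℕ}

/-- Polynomials in `m + 1` variables as polynomials in the variable `i`, with coefficients in the
remaining ones. -/
noncomputable def isolateVar (R : Type*) [CommRing R] {m : ℕ} (i : Fin (m + 1)) :
    MvPolynomial (Fin (m + 1)) R ≃ₐ[R] (MvPolynomial (Fin m) R)[X] :=
  (MvPolynomial.renameEquiv R (finSuccEquiv' i)).trans (MvPolynomial.optionEquivLeft R (Fin m))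

lemma isolateVar_X_self (i : Fin (m + 1)) :
    isolateVar R i (MvPolynomial.X i) = X := by
  simp [isolateVar]

lemma isolateVar_X_succAbove (i : Fin (m + 1)) (j : Fin m) :
    isolateVar R i (MvPolynomial.X (i.succAbove j)) = C (MvPolynomial.X j) := by
  simp [isolateVar]

lemma isolateVar_C (i : Fin (m + 1)) (r : R) :
    isolateVar R i (MvPolynomial.C r) = C (MvPolynomial.C r) := by
  simp [isolateVar]

/-- Polynomials in `m + 2` variables as bivariate polynomials in the last variable, as `X`, and the
variable `i`, as `Y`, with coefficients in the remaining ones. -/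
noncomputable def isolateVarLast (R : Type*) [CommRing R] {m : ℕ} (i : Fin (m + 1)) :
    MvPolynomial (Fin (m + 2)) R ≃ₐ[R] (MvPolynomial (Fin m) R)[X][Y] :=
  (isolateVar R i.castSucc).trans (mapAlgEquiv (isolateVar R (Fin.last m)))

lemma isolateVarLast_X_castSucc_self (i : Fin (m + 1)) :
    isolateVarLast R i (MvPolynomial.X i.castSucc) = Y := by
  simp [isolateVarLast, isolateVar_X_self]

lemma isolateVarLast_X_last (i : Fin (m + 1)) :
    isolateVarLast R i (MvPolynomial.X (Fin.last (m + 1))) = C X := by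
  have hlast : i.castSucc.succAbove (Fin.last m) = Fin.last (m + 1) := by simp
  rw [isolateVarLast, ← hlast, AlgEquiv.trans_apply, isolateVar_X_succAbove]
  simp [isolateVar_X_self]

lemma isolateVarLast_X_castSucc_succAbove (i : Fin (m + 1)) (j : Fin m) :
    isolateVarLast R i (MvPolynomial.X (i.succAbove j).castSucc) = C (C (MvPolynomial.X j)) := by
  rw [isolateVarLast, ← Fin.castSucc_succAbove_castSucc, AlgEquiv.trans_apply,
    isolateVar_X_succAbove, ← Fin.succAbove_last_apply]
  simp [-Fin.succAbove_last, isolateVar_X_succAbove]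

lemma isolateVarLast_C (i : Fin (m + 1)) (r : R) :
    isolateVarLast R i (MvPolynomial.C r) = C (C (MvPolynomial.C r)) := by
  simp [isolateVarLast, isolateVar_C]

/-- The substitution `T_i ↦ q` and `T_j ↦ Y_j` for `j ≠ i`. -/
noncomputable def replaceVar {n : ℕ} (i : Fin n) (q : MvPolynomial (Fin (n + 1)) R) :
    MvPolynomial (Fin n) R →ₐ[R] MvPolynomial (Fin (n + 1)) R :=
  MvPolynomial.aeval fun j ↦ if j = i then q else MvPolynomial.X j.castSucc

lemma isolateVarLast_replaceVar (i : Fin (m + 1)) (q : MvPolynomial (Fin (m + 2)) R)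
    (p : MvPolynomial (Fin (m + 1)) R) :
    isolateVarLast R i (replaceVar i q p) = aeval (isolateVarLast R i q) (isolateVar R i p) := by
  suffices (isolateVarLast R i).toAlgHom.comp (replaceVar i q) =
      ((aeval (R := MvPolynomial (Fin m) R) (isolateVarLast R i q)).restrictScalars R).comp
        (isolateVar R i).toAlgHom from DFunLike.congr_fun this p
  refine MvPolynomial.algHom_ext fun j ↦ ?_
  rcases Fin.eq_self_or_eq_succAbove i j with rfl | ⟨j, rfl⟩
  · simp [replaceVar, isolateVar_X_self]
  · simp [replaceVar, isolateVar_X_succAbove, Fin.succAbove_ne,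
      isolateVarLast_X_castSucc_succAbove]

lemma flat_replaceVar (i : Fin (m + 1)) {q : MvPolynomial (Fin (m + 2)) R} {b : ℕ}
    (hb : b ≠ 0) (hq : ((isolateVarLast R i q).coeff b).contentIdeal = ⊤) :
    (replaceVar i q).toRingHom.Flat :=
  flat_of_ringEquiv_square (B := (MvPolynomial (Fin m) R)[X]) (D := (MvPolynomial (Fin m) R)[X][Y])
    (flat_aeval_of_contentIdeal_coeff_eq_top hb hq)
    (isolateVar R i).toRingEquiv (isolateVarLast R i).toRingEquiv (isolateVarLast_replaceVar i q)

end IsolateVariable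

section Eta

variable {R S : Type*} [CommRing R] [CommRing S]

/-- The polynomial functions `η_c^ℓ(y, z)`, on an arbitrary commutative ring. -/
def etaFun (ℓ : Fin 2) (c y z : R) : R :=
  if ℓ = 0 then (1 - (1 - c) * (1 - z)) * y else 1 - (1 - c) * y * (1 - z)

lemma map_etaFun {F : Type*} [FunLike F R S] [RingHomClass F R S] (φ : F) (ℓ : Fin 2)
    (c y z : R) : φ (etaFun ℓ c y z) = etaFun ℓ (φ c) (φ y) (φ z) := by
  simp [etaFun, apply_ite φ]

open Polynomial in
lemma coeff_one_etaFun (ℓ : Fin 2) (c : R) :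
    (etaFun ℓ (C (C c)) Y (C X) : R[X][Y]).coeff 1 =
      C (if ℓ = 0 then c else c - 1) + C (1 - c) * X := by
  by_cases hℓ : ℓ = 0
  · have hlin : (etaFun ℓ (C (C c)) Y (C X) : R[X][Y]) = C (C c + C (1 - c) * X) * Y := by
      simp only [etaFun, if_pos hℓ, map_add, map_sub, map_mul, map_one]
      ring
    rw [hlin, coeff_C_mul, coeff_X_one, mul_one, if_pos hℓ]
  · have hlin : (etaFun ℓ (C (C c)) Y (C X) : R[X][Y]) =
        C 1 + C (C (c - 1) + C (1 - c) * X) * Y := by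
      simp only [etaFun, if_neg hℓ, map_add, map_sub, map_mul, map_one]
      ring
    rw [hlin, coeff_add, coeff_C_succ, zero_add, coeff_C_mul, coeff_X_one, mul_one, if_neg hℓ]

open Polynomial in
lemma contentIdeal_coeff_one_etaFun {ℓ : Fin 2} {c : R} (hc : ℓ ≠ 0 → IsUnit (1 - c)) :
    ((etaFun ℓ (C (C c)) Y (C X) : R[X][Y]).coeff 1).contentIdeal = ⊤ := by
  set p : R[X] := (etaFun ℓ (C (C c)) Y (C X) : R[X][Y]).coeff 1 with hp
  have hp0 : p.coeff 0 = if ℓ = 0 then c else c - 1 := by simp [hp, coeff_one_etaFun]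
  have hp1 : p.coeff 1 = 1 - c := by simp [hp, coeff_one_etaFun, coeff_C_succ]
  by_cases hℓ : ℓ = 0
  · have hsum : p.coeff 0 + p.coeff 1 = 1 := by
      rw [hp0, hp1, if_pos hℓ, add_sub_cancel]
    rw [Ideal.eq_top_iff_one, ← hsum]
    exact add_mem (p.coeff_mem_contentIdeal 0) (p.coeff_mem_contentIdeal 1)
  · exact Ideal.eq_top_of_isUnit_mem _ (p.coeff_mem_contentIdeal 1) (hp1 ▸ hc hℓ)

lemma flat_replaceVar_etaFun {m : ℕ} (i : Fin (m + 1)) {ℓ : Fin 2} {c : R}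
    (hc : ℓ ≠ 0 → IsUnit (1 - c)) :
    (replaceVar i
      (etaFun ℓ (.C c) (.X i.castSucc) (.X (Fin.last (m + 1))))).toRingHom.Flat := by
  refine flat_replaceVar i one_ne_zero ?_
  rw [map_etaFun, isolateVarLast_C, isolateVarLast_X_castSucc_self, isolateVarLast_X_last]
  refine contentIdeal_coeff_one_etaFun fun hℓ ↦ ?_
  simpa using (hc hℓ).map MvPolynomial.C

end Eta

open MvPolynomial in
theorem H_flat_general (k : Type*) [CommRing k] (n : ℕ) (i : Fin n) (ℓ : Fin 2)
    (c : Fin n → k) (hc : ℓ ≠ 0 → IsUnit (1 - c i)) :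
    RingHom.Flat (MvPolynomial.aeval (R := k)
      (fun j : Fin n => if j = i then
          (if ℓ = 0 then (1 - C (1 - c i) * (1 - X (Fin.last n))) * X i.castSucc
            else 1 - C (1 - c i) * X i.castSucc * (1 - X (Fin.last n)))
        else (X j.castSucc : MvPolynomial (Fin (n + 1)) k))).toRingHom := by
  obtain ⟨m, rfl⟩ := Nat.exists_eq_succ_of_ne_zero i.pos.ne'
  simp only [map_sub, map_one]
  exact flat_replaceVar_etaFun i hc

open MvPolynomial in
/-- For `1 ≤ i ≤ n`, `ℓ ∈ {0,1}` and `c ∈ kⁿ` with `c_i ≠ 0, 1`, the `k`-algebra map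
`k[T₁,…,Tₙ] → k[Y₁,…,Y_{n+1}]` sending `T_j ↦ Y_j` for `j ≠ i` and
`T_i ↦ (1-(1-c_i)(1-Y_{n+1}))·Y_i` if `ℓ = 0`, resp. `T_i ↦ 1-(1-c_i)·Y_i·(1-Y_{n+1})`
if `ℓ = 1`, is flat; i.e. the morphism `H^{n+1}_{(ℓ),c,i} : 𝔸^{n+1}_k → 𝔸ⁿ_k` is flat. -/
theorem H_flat (k : Type*) [Field k] (n : ℕ) (hn : 1 ≤ n) (i : Fin n) (ℓ : Fin 2)
    (c : Fin n → k) (hc0 : c i ≠ 0) (hc1 : c i ≠ 1) :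
    RingHom.Flat (MvPolynomial.aeval (R := k)
      (fun j : Fin n => if j = i then
          (if ℓ = 0 then (1 - C (1 - c i) * (1 - X (Fin.last n))) * X i.castSucc
            else 1 - C (1 - c i) * X i.castSucc * (1 - X (Fin.last n)))
        else (X j.castSucc : MvPolynomial (Fin (n + 1)) k))).toRingHom :=
  H_flat_general k n i ℓ c fun _ ↦ (sub_ne_zero.mpr hc1.symm).isUnit
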